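/- Let Y = L* + S* where L* ∈ ℝ^{n₁×n₂} has rank r and is μ-incoherent, and S* ∈ S_{γ*}. Let a ≤ 1/2, γ > 2γ*, and C₁ = √(4(γ+2γ*)μr + 4γ*/(γ−γ*) + a²) < 1/2. If the initialization satisfies ‖L⁽⁰⁾ − L*‖_F ≤ a σ_r(L*), then there exists η₀ > 0 such that for all step sizes η < η₀, the iterates L⁽ᵏ⁾ of the manifold gradient descent L⁽ᵏ⁺¹⁾ = R_{L⁽ᵏ⁾}(−η P_{T_{L⁽ᵏ⁾}} F_γ(L⁽ᵏ⁾ − Y)) (with R either the projective or the orthographic retraction) satisfy ‖L⁽ᵏ⁾ − L*‖_F ≤ (1 − (1−2C₁)η/8)ᵏ ‖L⁽⁰⁾ − L*‖_F for all k. -/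

import Mathlib

open Matrix MeasureTheory ProbabilityTheory Filter
open scoped BigOperators ENNReal NNReal

noncomputable section

namespace RPCA

variable {n₁ n₂ r : ℕ}

/-- Frobenius norm of a real matrix. -/
def frob (A : Matrix (Fin n₁) (Fin n₂) ℝ) : ℝ :=
  Real.sqrt (∑ i, ∑ j, (A i j) ^ 2)

/-- Frobenius inner product of two real matrices. -/
def finner (A B : Matrix (Fin n₁) (Fin n₂) ℝ) : ℝ :=
  ∑ i, ∑ j, A i j * B i j

/-- Spectral norm (operator norm) of a real matrix. -/
def spec (A : Matrix (Fin n₁) (Fin n₂) ℝ) : ℝ :=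
  sSup {c | ∃ v : Fin n₂ → ℝ, (∑ j, (v j) ^ 2) = 1 ∧
    c = Real.sqrt (∑ i, (∑ j, A i j * v j) ^ 2)}

/-- Smallest singular value of a square matrix. -/
def sigmaMin (A : Matrix (Fin r) (Fin r) ℝ) : ℝ :=
  sInf {c | ∃ v : Fin r → ℝ, (∑ k, (v k) ^ 2) = 1 ∧
    c = Real.sqrt (∑ i, (∑ k, A i k * v k) ^ 2)}

/-- The γ-th percentile (counting the fraction γ from the largest) of a multiset of reals. -/
def percentile (γ : ℝ) (s : Multiset ℝ) : ℝ :=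
  (s.sort (· ≤ ·)).getD (s.card - ⌈γ * s.card⌉₊) 0

/-- Absolute values of the entries of row `i`. -/
def rowAbs (A : Matrix (Fin n₁) (Fin n₂) ℝ) (i : Fin n₁) : Multiset ℝ :=
  (Finset.univ : Finset (Fin n₂)).val.map fun j => |A i j|

/-- Absolute values of the entries of column `j`. -/
def colAbs (A : Matrix (Fin n₁) (Fin n₂) ℝ) (j : Fin n₂) : Multiset ℝ :=
  (Finset.univ : Finset (Fin n₁)).val.map fun i => |A i j|

/-- The hard-thresholding operator `F_γ`: entries that are simultaneously above the γ-th
percentile of absolute values of their row and of their column are set to zero. -/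
def hardThresh (γ : ℝ) (A : Matrix (Fin n₁) (Fin n₂) ℝ) : Matrix (Fin n₁) (Fin n₂) ℝ :=
  Matrix.of fun i j =>
    if percentile γ (rowAbs A i) < |A i j| ∧ percentile γ (colAbs A j) < |A i j| then 0
    else A i j

/-- Absolute values of the observed entries of row `i`. -/
def rowAbsObs (Φ : Finset (Fin n₁ × Fin n₂)) (A : Matrix (Fin n₁) (Fin n₂) ℝ) (i : Fin n₁) :
    Multiset ℝ :=
  ((Φ.filter fun q => q.1 = i).val).map fun q => |A q.1 q.2|

/-- Absolute values of the observed entries of column `j`. -/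
def colAbsObs (Φ : Finset (Fin n₁ × Fin n₂)) (A : Matrix (Fin n₁) (Fin n₂) ℝ) (j : Fin n₂) :
    Multiset ℝ :=
  ((Φ.filter fun q => q.2 = j).val).map fun q => |A q.1 q.2|

/-- Partially observed thresholding operator `F̃_γ`: `F̃_ij A = A i j` if `|A i j|` exceeds the
γ-th percentile of absolute values of observed entries in both its row and its column,
and `0` otherwise. -/
def hardThreshObs (γ : ℝ) (Φ : Finset (Fin n₁ × Fin n₂)) (A : Matrix (Fin n₁) (Fin n₂) ℝ) :
    Matrix (Fin n₁) (Fin n₂) ℝ :=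
  Matrix.of fun i j =>
    if percentile γ (rowAbsObs Φ A i) < |A i j| ∧ percentile γ (colAbsObs Φ A j) < |A i j| then
      A i j
    else 0

/-- `P_Φ`: zero out the entries outside the observed set `Φ`. -/
def projObs (Φ : Finset (Fin n₁ × Fin n₂)) (A : Matrix (Fin n₁) (Fin n₂) ℝ) :
    Matrix (Fin n₁) (Fin n₂) ℝ :=
  Matrix.of fun i j => if (i, j) ∈ Φ then A i j else 0

/-- The sparsity class `S_{γ*}`: at most `γ* n₂` nonzero entries in each row and at most
`γ* n₁` nonzero entries in each column. -/
def SparseSet (γs : ℝ) (A : Matrix (Fin n₁) (Fin n₂) ℝ) : Prop :=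
  (∀ i, (((Finset.univ : Finset (Fin n₂)).filter fun j => A i j ≠ 0).card : ℝ) ≤ γs * n₂) ∧
  (∀ j, (((Finset.univ : Finset (Fin n₁)).filter fun i => A i j ≠ 0).card : ℝ) ≤ γs * n₁)

/-- Thin SVD `L = U (diagonal s) Vᵀ` with orthonormal `U, V` and positive decreasing
singular values `s`; this encodes that `L` has rank exactly `r`. -/
def IsThinSVD (L : Matrix (Fin n₁) (Fin n₂) ℝ) (U : Matrix (Fin n₁) (Fin r) ℝ)
    (s : Fin r → ℝ) (V : Matrix (Fin n₂) (Fin r) ℝ) : Prop :=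
  Uᵀ * U = 1 ∧ Vᵀ * V = 1 ∧ Antitone s ∧ (∀ k, 0 < s k) ∧ L = U * Matrix.diagonal s * Vᵀ

/-- μ-incoherence of the orthonormal SVD factors `U, V`: every row of `U` has Euclidean norm
at most `√(μ r / n₁)` and every row of `V` has Euclidean norm at most `√(μ r / n₂)`. -/
def Incoherent (μc : ℝ) (U : Matrix (Fin n₁) (Fin r) ℝ) (V : Matrix (Fin n₂) (Fin r) ℝ) :
    Prop :=
  (∀ i, Real.sqrt (∑ k, (U i k) ^ 2) ≤ Real.sqrt (μc * r / n₁)) ∧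
  (∀ j, Real.sqrt (∑ k, (V j k) ^ 2) ≤ Real.sqrt (μc * r / n₂))

/-- Tangent-space projection `P_{T_X} D = UUᵀD + DVVᵀ − UUᵀDVVᵀ` at a rank-r point with
orthonormal factors `U, V`. -/
def tangentProj (U : Matrix (Fin n₁) (Fin r) ℝ) (V : Matrix (Fin n₂) (Fin r) ℝ)
    (D : Matrix (Fin n₁) (Fin n₂) ℝ) : Matrix (Fin n₁) (Fin n₂) ℝ :=
  U * Uᵀ * D + D * (V * Vᵀ) - U * Uᵀ * D * (V * Vᵀ)

/-- `Z` is a best rank-r approximation of `M` in Frobenius norm. -/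
def IsBestRankApprox (r : ℕ) (M Z : Matrix (Fin n₁) (Fin n₂) ℝ) : Prop :=
  Z.rank ≤ r ∧ ∀ W : Matrix (Fin n₁) (Fin n₂) ℝ, W.rank ≤ r → frob (M - Z) ≤ frob (M - W)

/-- Orthographic retraction formula `M V (Uᵀ M V)⁻¹ Uᵀ M` where `M = X + δ`. -/
def orthoRetract (U : Matrix (Fin n₁) (Fin r) ℝ) (V : Matrix (Fin n₂) (Fin r) ℝ)
    (M : Matrix (Fin n₁) (Fin n₂) ℝ) : Matrix (Fin n₁) (Fin n₂) ℝ :=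
  M * V * (Uᵀ * M * V)⁻¹ * (Uᵀ * M)

/-- `Lnext` is obtained from `Lk` by applying either the projective or the orthographic
retraction (for the rank-r manifold) to the tangent vector `δ` at `Lk`. -/
def IsRetractUpdate (r : ℕ) (Lk δ Lnext : Matrix (Fin n₁) (Fin n₂) ℝ) : Prop :=
  IsBestRankApprox r (Lk + δ) Lnext ∨
  ∃ (U : Matrix (Fin n₁) (Fin r) ℝ) (s : Fin r → ℝ) (V : Matrix (Fin n₂) (Fin r) ℝ),
    IsThinSVD Lk U s V ∧ Lnext = orthoRetract U V (Lk + δ)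

/-- One step of manifold gradient descent with the fully observed thresholded gradient:
`Lnext = R_{Lk}(−η P_{T_{Lk}} F_γ(Lk − Y))`. -/
def IsGradStep (γ η : ℝ) (r : ℕ) (Y Lk Lnext : Matrix (Fin n₁) (Fin n₂) ℝ) : Prop :=
  ∃ (U : Matrix (Fin n₁) (Fin r) ℝ) (s : Fin r → ℝ) (V : Matrix (Fin n₂) (Fin r) ℝ),
    IsThinSVD Lk U s V ∧
    IsRetractUpdate r Lk (-(η • tangentProj U V (hardThresh γ (Lk - Y)))) Lnext

/-- One step of manifold gradient descent with the partially observed thresholded gradient: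
`Lnext = R_{Lk}(−η P_{T_{Lk}} F̃_γ(Lk − Y))`. -/
def IsGradStepObs (γ η : ℝ) (r : ℕ) (Φ : Finset (Fin n₁ × Fin n₂))
    (Y Lk Lnext : Matrix (Fin n₁) (Fin n₂) ℝ) : Prop :=
  ∃ (U : Matrix (Fin n₁) (Fin r) ℝ) (s : Fin r → ℝ) (V : Matrix (Fin n₂) (Fin r) ℝ),
    IsThinSVD Lk U s V ∧
    IsRetractUpdate r Lk (-(η • tangentProj U V (hardThreshObs γ Φ (Lk - Y)))) Lnext

end RPCA

/-!
Let `E = X - L⋆` be the error of an iterate `X`. The residual `X - Y` is `E - S⋆`, and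
`F_γ(E - S⋆)` agrees with `E` outside the thresholded and the corrupted positions, which together
form a sparse set. On that set the part of `E` tangent at `L⋆` is small, being a sum of two
matrices with incoherent column and row space respectively, and the part of `E` normal at `L⋆` is
quadratic in `E`, because a rank-`r` matrix near `L⋆` is its own orthographic retraction from `L⋆`.
The corrupted entries that survive thresholding lie below a percentile of their row or column,
hence are dominated by many uncorrupted entries, where the residual is `E` itself. Altogether
`‖F_γ(E - S⋆) - E‖ ≤ (3/2) C₁ ‖E‖`.

At `X`, too, the normal part of `E` is quadratic, so at most `‖E‖ / 2`; by Pythagoras, moving along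
`-η P_T E` contracts the error by `1 - (3/4) η + O(η²)`, and replacing `E` by the thresholded
residual costs at most `(3/2) C₁ η ‖E‖`. Finally, the orthographic retraction moves `X + δ` only by
`O(‖δ‖² / σ_r) = O(η² ‖E‖)`, and the projective one, being a best rank-`r` approximation, by no
more.
-/

namespace RPCA

lemma le_pow_mul_of_le_imp_le_mul {e : ℕ → ℝ} {q R : ℝ} (hq₀ : 0 ≤ q) (hq₁ : q ≤ 1)
    (he : ∀ k, 0 ≤ e k) (hR : e 0 ≤ R) (hstep : ∀ k, e k ≤ R → e (k + 1) ≤ q * e k) (k : ℕ) :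
    e k ≤ q ^ k * e 0 := by
  have hbdd : ∀ k, e k ≤ R := fun k => by
    induction k with
    | zero => exact hR
    | succ k ih => exact (hstep k ih).trans ((mul_le_of_le_one_left (he k) hq₁).trans ih)
  exact le_geom hq₀ k fun k _ => hstep k (hbdd k)

section MatrixGeometry

open scoped Matrix.Norms.Frobenius

variable {m n k l : Type*} [Fintype m] [Fintype n] [Fintype k] [Fintype l]

/-! ### The Frobenius norm -/

lemma frobenius_norm_sq (A : Matrix m n ℝ) : ‖A‖ ^ 2 = ∑ i, ∑ j, A i j ^ 2 := by
  rw [Matrix.frobenius_norm_def, ← Real.sqrt_eq_rpow, Real.sq_sqrt (by positivity)]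
  simp

lemma frob_eq_norm {n₁ n₂ : ℕ} (A : Matrix (Fin n₁) (Fin n₂) ℝ) : frob A = ‖A‖ := by
  rw [frob, ← frobenius_norm_sq, Real.sqrt_sq (norm_nonneg A)]

lemma frobenius_norm_sq_eq_trace (A : Matrix m n ℝ) : ‖A‖ ^ 2 = (Aᵀ * A).trace := by
  rw [frobenius_norm_sq, Finset.sum_comm]
  simp [Matrix.trace, Matrix.mul_apply, sq]

lemma frobenius_norm_sq_eq_sum_col (A : Matrix m n ℝ) :
    ‖A‖ ^ 2 = ∑ j, ‖replicateCol Unit (A.col j)‖ ^ 2 := by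
  simp only [frobenius_norm_sq, replicateCol_apply, col_apply, Finset.univ_unique,
    Finset.sum_singleton]
  exact Finset.sum_comm

lemma frobenius_norm_sq_smul_add_smul {A B : Matrix m n ℝ} (h : (Aᵀ * B).trace = ‖B‖ ^ 2)
    (a b : ℝ) : ‖a • A + b • B‖ ^ 2 = a ^ 2 * ‖A‖ ^ 2 + (2 * a * b + b ^ 2) * ‖B‖ ^ 2 := by
  have h' : (Bᵀ * A).trace = ‖B‖ ^ 2 := by
    rw [← h, ← trace_transpose, transpose_mul, transpose_transpose]
  simp only [frobenius_norm_sq_eq_trace, transpose_add, transpose_smul, Matrix.add_mul,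
    Matrix.mul_add, Matrix.smul_mul, Matrix.mul_smul, trace_add, trace_smul, smul_eq_mul] at h h' ⊢
  rw [h, h']
  ring

section StarProjection

variable {P : Matrix m m ℝ} {Q : Matrix n n ℝ}

lemma transpose_eq_of_isStarProjection (hP : IsStarProjection P) : Pᵀ = P := by
  simpa [star_eq_conjTranspose] using hP.isSelfAdjoint.star_eq

lemma norm_sq_isStarProjection_mul (hP : IsStarProjection P) (A : Matrix m n ℝ) :
    ‖P * A‖ ^ 2 = (Aᵀ * (P * A)).trace := by
  rw [frobenius_norm_sq_eq_trace, transpose_mul, transpose_eq_of_isStarProjection hP,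
    Matrix.mul_assoc, ← Matrix.mul_assoc P, hP.isIdempotentElem.eq]

lemma norm_sq_add_norm_sq_one_sub [DecidableEq m] (hP : IsStarProjection P) (A : Matrix m n ℝ) :
    ‖P * A‖ ^ 2 + ‖(1 - P) * A‖ ^ 2 = ‖A‖ ^ 2 := by
  rw [norm_sq_isStarProjection_mul hP, norm_sq_isStarProjection_mul hP.one_sub, ← trace_add,
    ← Matrix.mul_add, ← Matrix.add_mul, add_sub_cancel, Matrix.one_mul,
    frobenius_norm_sq_eq_trace]

lemma norm_isStarProjection_mul_le (hP : IsStarProjection P) (A : Matrix m n ℝ) :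
    ‖P * A‖ ≤ ‖A‖ := by
  classical
  have h := norm_sq_add_norm_sq_one_sub hP A
  exact abs_le_of_sq_le_sq' (by nlinarith [sq_nonneg ‖(1 - P) * A‖]) (norm_nonneg A) |>.2

lemma norm_mul_isStarProjection_le (hQ : IsStarProjection Q) (A : Matrix m n ℝ) :
    ‖A * Q‖ ≤ ‖A‖ := by
  rw [← frobenius_norm_transpose, transpose_mul, transpose_eq_of_isStarProjection hQ,
    ← frobenius_norm_transpose A]
  exact norm_isStarProjection_mul_le hQ Aᵀ

lemma norm_sq_smul_add_smul_isStarProjection_mul (hP : IsStarProjection P)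
    (hQ : IsStarProjection Q) (A : Matrix m n ℝ) (a b : ℝ) :
    ‖a • A + b • (P * A * Q)‖ ^ 2 = a ^ 2 * ‖A‖ ^ 2 + (2 * a * b + b ^ 2) * ‖P * A * Q‖ ^ 2 := by
  refine frobenius_norm_sq_smul_add_smul ?_ a b
  have hPP : Pᵀ * P = P := by rw [transpose_eq_of_isStarProjection hP, hP.isIdempotentElem.eq]
  have hQQ : Q * Qᵀ = Q := by rw [transpose_eq_of_isStarProjection hQ, hQ.isIdempotentElem.eq]
  calc (Aᵀ * (P * A * Q)).trace = (Aᵀ * (Pᵀ * P) * A * (Q * Qᵀ)).trace := by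
        rw [hPP, hQQ]; simp only [Matrix.mul_assoc]
    _ = (Qᵀ * (Aᵀ * (Pᵀ * P) * A) * Q).trace := by
        rw [← Matrix.mul_assoc, trace_mul_cycle, Matrix.mul_assoc]
    _ = ‖P * A * Q‖ ^ 2 := by
        rw [frobenius_norm_sq_eq_trace]; simp only [transpose_mul, Matrix.mul_assoc]

end StarProjection

section OrthonormalColumns

variable [DecidableEq k] {U : Matrix m k ℝ}

lemma norm_mul_of_transpose_mul_self (hU : Uᵀ * U = 1) (A : Matrix k n ℝ) : ‖U * A‖ = ‖A‖ := by
  rw [← sq_eq_sq₀ (norm_nonneg _) (norm_nonneg _), frobenius_norm_sq_eq_trace,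
    frobenius_norm_sq_eq_trace, transpose_mul, Matrix.mul_assoc, ← Matrix.mul_assoc Uᵀ, hU,
    Matrix.one_mul]

lemma isStarProjection_mul_transpose (hU : Uᵀ * U = 1) : IsStarProjection (U * Uᵀ) where
  isIdempotentElem := by
    rw [IsIdempotentElem, Matrix.mul_assoc, ← Matrix.mul_assoc Uᵀ, hU, Matrix.one_mul]
  isSelfAdjoint := by simp [IsSelfAdjoint, star_eq_conjTranspose]

lemma one_sub_mul_transpose_mul_self [DecidableEq m] (hU : Uᵀ * U = 1) : (1 - U * Uᵀ) * U = 0 := by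
  rw [Matrix.sub_mul, Matrix.mul_assoc, hU, Matrix.mul_one, Matrix.one_mul, sub_self]

lemma norm_transpose_mul_le (hU : Uᵀ * U = 1) (A : Matrix m n ℝ) : ‖Uᵀ * A‖ ≤ ‖A‖ := by
  rw [← norm_mul_of_transpose_mul_self hU, ← Matrix.mul_assoc]
  exact norm_isStarProjection_mul_le (isStarProjection_mul_transpose hU) A

lemma norm_mul_le_of_transpose_mul_self (hU : Uᵀ * U = 1) (A : Matrix n m ℝ) :
    ‖A * U‖ ≤ ‖A‖ := by
  rw [← frobenius_norm_transpose, transpose_mul, ← frobenius_norm_transpose A]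
  exact norm_transpose_mul_le hU Aᵀ

end OrthonormalColumns

/-! ### Matrices bounded below -/

/-- `B` is bounded below by `β`: `β ‖x‖ ≤ ‖B x‖` for all vectors `x`; for `β > 0` this says that
`B` is injective with least singular value at least `β`. Vectors are written as one-column matrices,
on which the Frobenius norm is the Euclidean one. -/
def IsBoundedBelow (β : ℝ) (B : Matrix m n ℝ) : Prop :=
  ∀ x : Matrix n Unit ℝ, β * ‖x‖ ≤ ‖B * x‖

namespace IsBoundedBelow

variable {β c : ℝ}

lemma mono {B : Matrix m n ℝ} (h : IsBoundedBelow β B) (hc : c ≤ β) : IsBoundedBelow c B :=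
  fun x => (mul_le_mul_of_nonneg_right hc (norm_nonneg x)).trans (h x)

lemma mul_norm_le {B : Matrix m n ℝ} (h : IsBoundedBelow β B) (hβ : 0 ≤ β) (Z : Matrix n l ℝ) :
    β * ‖Z‖ ≤ ‖B * Z‖ := by
  refine abs_le_of_sq_le_sq' ?_ (norm_nonneg _) |>.2
  rw [mul_pow, frobenius_norm_sq_eq_sum_col Z, frobenius_norm_sq_eq_sum_col (B * Z),
    Finset.mul_sum]
  refine Finset.sum_le_sum fun j _ => ?_
  have hcol : replicateCol Unit ((B * Z).col j) = B * replicateCol Unit (Z.col j) := by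
    ext; simp [Matrix.mul_apply]
  rw [← mul_pow, hcol]
  gcongr
  exact h _

lemma isUnit_det_of_mul [DecidableEq n] {B : Matrix m n ℝ} {Q : Matrix n n ℝ}
    (h : IsBoundedBelow β (B * Q)) (hβ : 0 < β) : IsUnit Q.det := by
  rw [isUnit_iff_ne_zero]
  intro hdet
  obtain ⟨v, hv, hQv⟩ := Matrix.exists_mulVec_eq_zero_iff.mpr hdet
  have hx := h (replicateCol Unit v)
  rw [Matrix.mul_assoc, ← replicateCol_mulVec, hQv, replicateCol_zero, Matrix.mul_zero,
    norm_zero] at hx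
  have hzero : replicateCol Unit v = 0 :=
    norm_eq_zero.mp (le_antisymm (nonpos_of_mul_nonpos_right hx hβ) (norm_nonneg _))
  exact hv (replicateCol_injective (hzero.trans replicateCol_zero.symm))

lemma isUnit_det [DecidableEq n] {B : Matrix n n ℝ} (h : IsBoundedBelow β B) (hβ : 0 < β) :
    IsUnit B.det :=
  isUnit_det_of_mul (B := 1) (by rwa [Matrix.one_mul]) hβ

lemma add {B C : Matrix m n ℝ} (h : IsBoundedBelow β B) (hC : ‖C‖ ≤ c) :
    IsBoundedBelow (β - c) (B + C) := fun x => by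
  have hBC : ‖B * x‖ ≤ ‖(B + C) * x‖ + ‖C * x‖ := by
    simpa [Matrix.add_mul] using norm_sub_le ((B + C) * x) (C * x)
  have hCx : ‖C * x‖ ≤ c * ‖x‖ :=
    (frobenius_norm_mul C x).trans (mul_le_mul_of_nonneg_right hC (norm_nonneg x))
  linarith [h x]

lemma of_mul_right {B : Matrix m n ℝ} {Q : Matrix n n ℝ}
    (h : IsBoundedBelow β (B * Q)) (hQ : ∀ x : Matrix n Unit ℝ, ‖Q * x‖ ≤ ‖x‖) :
    IsBoundedBelow β B := fun x => by
  rcases le_or_gt β 0 with hβ | hβ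
  · exact (mul_nonpos_of_nonpos_of_nonneg hβ (norm_nonneg x)).trans (norm_nonneg _)
  classical
  have hx : Q * (Q⁻¹ * x) = x := Q.mul_nonsing_inv_cancel_left x (h.isUnit_det_of_mul hβ)
  calc β * ‖x‖ ≤ β * ‖Q⁻¹ * x‖ := by
        gcongr
        simpa only [hx] using hQ (Q⁻¹ * x)
    _ ≤ ‖B * Q * (Q⁻¹ * x)‖ := h _
    _ = ‖B * x‖ := by rw [Matrix.mul_assoc, hx]

lemma norm_mul_inv_mul_le [DecidableEq n] {B : Matrix n n ℝ} (h : IsBoundedBelow β B) (hβ : 0 < β)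
    (G : Matrix m n ℝ) (H : Matrix n l ℝ) : β * ‖G * B⁻¹ * H‖ ≤ ‖G‖ * ‖H‖ := by
  have hH : β * ‖B⁻¹ * H‖ ≤ ‖H‖ := by
    simpa only [B.mul_nonsing_inv_cancel_left H (h.isUnit_det hβ)] using
      h.mul_norm_le hβ.le (B⁻¹ * H)
  calc β * ‖G * B⁻¹ * H‖ ≤ β * (‖G‖ * ‖B⁻¹ * H‖) := by
        rw [Matrix.mul_assoc]
        gcongr
        exact frobenius_norm_mul _ _
    _ = ‖G‖ * (β * ‖B⁻¹ * H‖) := by ring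
    _ ≤ ‖G‖ * ‖H‖ := by gcongr

end IsBoundedBelow

lemma isBoundedBelow_diagonal [DecidableEq n] {s : n → ℝ} {σ : ℝ} (hσ : 0 ≤ σ)
    (hs : ∀ k, σ ≤ s k) : IsBoundedBelow σ (diagonal s) := fun x => by
  refine abs_le_of_sq_le_sq' ?_ (norm_nonneg _) |>.2
  simp only [mul_pow, frobenius_norm_sq, Finset.mul_sum, diagonal_mul]
  gcongr
  exact hs _

/-! ### Tangent and normal projections -/

variable {n₁ n₂ r : ℕ} {U : Matrix (Fin n₁) (Fin r) ℝ} {V : Matrix (Fin n₂) (Fin r) ℝ}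

/-- The projection `(I - UUᵀ) D (I - VVᵀ)` of `D` onto the normal space, complementary to the
tangent-space projection `tangentProj U V`. -/
def normalProj (U : Matrix (Fin n₁) (Fin r) ℝ) (V : Matrix (Fin n₂) (Fin r) ℝ)
    (D : Matrix (Fin n₁) (Fin n₂) ℝ) : Matrix (Fin n₁) (Fin n₂) ℝ :=
  (1 - U * Uᵀ) * D * (1 - V * Vᵀ)

lemma tangentProj_eq_sub_normalProj (D : Matrix (Fin n₁) (Fin n₂) ℝ) :
    tangentProj U V D = D - normalProj U V D := by
  simp only [tangentProj, normalProj, Matrix.sub_mul, Matrix.mul_sub, Matrix.one_mul,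
    Matrix.mul_one]
  abel

lemma normalProj_sub (D D' : Matrix (Fin n₁) (Fin n₂) ℝ) :
    normalProj U V (D - D') = normalProj U V D - normalProj U V D' := by
  simp only [normalProj, Matrix.mul_sub, Matrix.sub_mul]
  abel

lemma normalProj_smul (a : ℝ) (D : Matrix (Fin n₁) (Fin n₂) ℝ) :
    normalProj U V (a • D) = a • normalProj U V D := by
  simp only [normalProj, Matrix.mul_smul, Matrix.smul_mul]

lemma normalProj_tangentProj (hU : Uᵀ * U = 1) (hV : Vᵀ * V = 1)
    (D : Matrix (Fin n₁) (Fin n₂) ℝ) : normalProj U V (tangentProj U V D) = 0 := by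
  have hP := (isStarProjection_mul_transpose hU).one_sub.isIdempotentElem.eq
  have hQ := (isStarProjection_mul_transpose hV).one_sub.isIdempotentElem.eq
  rw [tangentProj_eq_sub_normalProj, normalProj_sub, sub_eq_zero]
  conv_lhs => rw [normalProj, ← hP, ← hQ]
  simp only [normalProj, Matrix.mul_assoc]

lemma norm_sq_smul_add_smul_normalProj (hU : Uᵀ * U = 1) (hV : Vᵀ * V = 1)
    (D : Matrix (Fin n₁) (Fin n₂) ℝ) (a b : ℝ) :
    ‖a • D + b • normalProj U V D‖ ^ 2 =
      a ^ 2 * ‖D‖ ^ 2 + (2 * a * b + b ^ 2) * ‖normalProj U V D‖ ^ 2 :=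
  norm_sq_smul_add_smul_isStarProjection_mul (isStarProjection_mul_transpose hU).one_sub
    (isStarProjection_mul_transpose hV).one_sub D a b

lemma norm_tangentProj_le (hU : Uᵀ * U = 1) (hV : Vᵀ * V = 1) (D : Matrix (Fin n₁) (Fin n₂) ℝ) :
    ‖tangentProj U V D‖ ≤ ‖D‖ := by
  have h := norm_sq_smul_add_smul_normalProj hU hV D 1 (-1)
  rw [one_smul, neg_one_smul, ← sub_eq_add_neg, ← tangentProj_eq_sub_normalProj] at h
  exact abs_le_of_sq_le_sq' (by nlinarith [sq_nonneg ‖normalProj U V D‖]) (norm_nonneg D) |>.2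

namespace IsThinSVD

variable {X : Matrix (Fin n₁) (Fin n₂) ℝ} {s : Fin r → ℝ}

lemma transpose (hX : IsThinSVD X U s V) : IsThinSVD Xᵀ V s U := by
  obtain ⟨hU, hV, hanti, hpos, rfl⟩ := hX
  exact ⟨hV, hU, hanti, hpos, by simp [Matrix.mul_assoc]⟩

lemma pos_left (hX : IsThinSVD X U s V) (hr : 0 < r) : 0 < n₁ := by
  by_contra! hn
  obtain rfl := Nat.le_zero.mp hn
  simpa [Matrix.mul_apply] using congrFun₂ hX.1 ⟨0, hr⟩ ⟨0, hr⟩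

lemma mul_right_factor (hX : IsThinSVD X U s V) : X * V = U * diagonal s := by
  obtain ⟨-, hV, -, -, rfl⟩ := hX
  rw [Matrix.mul_assoc, hV, Matrix.mul_one]

lemma transpose_mul_mul (hX : IsThinSVD X U s V) : Uᵀ * X * V = diagonal s := by
  rw [Matrix.mul_assoc, hX.mul_right_factor, ← Matrix.mul_assoc, hX.1, Matrix.one_mul]

lemma one_sub_mul (hX : IsThinSVD X U s V) : (1 - U * Uᵀ) * X = 0 := by
  obtain ⟨hU, -, -, -, rfl⟩ := hX
  rw [Matrix.mul_assoc U, ← Matrix.mul_assoc, one_sub_mul_transpose_mul_self hU, Matrix.zero_mul]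

lemma mul_one_sub (hX : IsThinSVD X U s V) : X * (1 - V * Vᵀ) = 0 := by
  simpa using congrArg Matrix.transpose hX.transpose.one_sub_mul

lemma mul_left_factor_eq_zero (hX : IsThinSVD X U s V) {m : Type*} {A : Matrix m (Fin n₁) ℝ}
    (hA : A * X = 0) : A * U = 0 := by
  have hdet : IsUnit (diagonal s).det := by
    rw [det_diagonal, isUnit_iff_ne_zero]
    exact Finset.prod_ne_zero_iff.mpr fun k _ => (hX.2.2.2.1 k).ne'
  rw [← Matrix.mul_nonsing_inv_cancel_right (diagonal s) (A * U) hdet, Matrix.mul_assoc A,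
    ← hX.mul_right_factor, ← Matrix.mul_assoc, hA, Matrix.zero_mul, Matrix.zero_mul]

lemma mul_transpose_eq (hX : IsThinSVD X U s V) {U' : Matrix (Fin n₁) (Fin r) ℝ}
    {s' : Fin r → ℝ} {V' : Matrix (Fin n₂) (Fin r) ℝ} (hX' : IsThinSVD X U' s' V') :
    U * Uᵀ = U' * U'ᵀ := by
  have absorb {U U' : Matrix (Fin n₁) (Fin r) ℝ} {s s' : Fin r → ℝ}
      {V V' : Matrix (Fin n₂) (Fin r) ℝ} (hX : IsThinSVD X U s V) (hX' : IsThinSVD X U' s' V') :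
      U' * U'ᵀ * (U * Uᵀ) = U * Uᵀ := by
    have h := hX.mul_left_factor_eq_zero hX'.one_sub_mul
    rw [Matrix.sub_mul, Matrix.one_mul, sub_eq_zero] at h
    rw [← Matrix.mul_assoc, ← h]
  calc U * Uᵀ = (U' * U'ᵀ * (U * Uᵀ))ᵀ := by rw [absorb hX hX']; simp
    _ = U * Uᵀ * (U' * U'ᵀ) := by simp
    _ = U' * U'ᵀ := absorb hX' hX

lemma normalProj_eq (hX : IsThinSVD X U s V) {U' : Matrix (Fin n₁) (Fin r) ℝ}
    {s' : Fin r → ℝ} {V' : Matrix (Fin n₂) (Fin r) ℝ} (hX' : IsThinSVD X U' s' V')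
    (D : Matrix (Fin n₁) (Fin n₂) ℝ) : normalProj U V D = normalProj U' V' D := by
  rw [normalProj, normalProj, hX.mul_transpose_eq hX',
    hX.transpose.mul_transpose_eq hX'.transpose]

lemma normalProj_eq_zero (hX : IsThinSVD X U s V) : normalProj U V X = 0 := by
  rw [normalProj, hX.one_sub_mul, Matrix.zero_mul]

end IsThinSVD

/-! ### The orthographic retraction -/

lemma rank_orthoRetract_le (M : Matrix (Fin n₁) (Fin n₂) ℝ) : (orthoRetract U V M).rank ≤ r :=
  (rank_mul_le_right _ _).trans ((rank_le_card_height _).trans_eq (Fintype.card_fin r))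

lemma orthoRetract_mul {G : Matrix (Fin n₁) (Fin r) ℝ} {H : Matrix (Fin r) (Fin n₂) ℝ}
    (hdet : IsUnit (Uᵀ * (G * H) * V).det) : orthoRetract U V (G * H) = G * H := by
  have hB : Uᵀ * (G * H) * V = (Uᵀ * G) * (H * V) := by simp only [Matrix.mul_assoc]
  rw [hB, det_mul, IsUnit.mul_iff] at hdet
  calc orthoRetract U V (G * H)
      = G * ((H * V) * (H * V)⁻¹) * ((Uᵀ * G)⁻¹ * (Uᵀ * G)) * H := by
        rw [orthoRetract, hB, Matrix.mul_inv_rev]; simp only [Matrix.mul_assoc]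
    _ = G * H := by
        rw [mul_nonsing_inv _ hdet.2, nonsing_inv_mul _ hdet.1, Matrix.mul_one, Matrix.mul_one]

lemma transpose_mul_orthoRetract {M : Matrix (Fin n₁) (Fin n₂) ℝ}
    (hdet : IsUnit (Uᵀ * M * V).det) : Uᵀ * orthoRetract U V M = Uᵀ * M := by
  calc Uᵀ * orthoRetract U V M = (Uᵀ * M * V) * (Uᵀ * M * V)⁻¹ * (Uᵀ * M) := by
        simp only [orthoRetract, Matrix.mul_assoc]
    _ = Uᵀ * M := by rw [mul_nonsing_inv _ hdet, Matrix.one_mul]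

lemma orthoRetract_mul_right_factor {M : Matrix (Fin n₁) (Fin n₂) ℝ}
    (hdet : IsUnit (Uᵀ * M * V).det) : orthoRetract U V M * V = M * V := by
  calc orthoRetract U V M * V = M * V * ((Uᵀ * M * V)⁻¹ * (Uᵀ * M * V)) := by
        simp only [orthoRetract, Matrix.mul_assoc]
    _ = M * V := by rw [nonsing_inv_mul _ hdet, Matrix.mul_one]

lemma tangentProj_orthoRetract {M : Matrix (Fin n₁) (Fin n₂) ℝ}
    (hdet : IsUnit (Uᵀ * M * V).det) :
    tangentProj U V (orthoRetract U V M) = tangentProj U V M := by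
  have hU := transpose_mul_orthoRetract hdet
  have hV := orthoRetract_mul_right_factor hdet
  rw [tangentProj, Matrix.mul_assoc U, hU, ← Matrix.mul_assoc _ V Vᵀ, hV]
  simp only [tangentProj, Matrix.mul_assoc]

lemma mul_norm_mul_orthoRetract_mul_le {M : Matrix (Fin n₁) (Fin n₂) ℝ} {β : ℝ}
    (hM : IsBoundedBelow β (Uᵀ * M * V)) (hβ : 0 < β) (A : Matrix m (Fin n₁) ℝ)
    (C : Matrix (Fin n₂) n ℝ) :
    β * ‖A * orthoRetract U V M * C‖ ≤ ‖A * M * V‖ * ‖Uᵀ * M * C‖ := by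
  have hassoc : A * orthoRetract U V M * C = A * M * V * (Uᵀ * M * V)⁻¹ * (Uᵀ * M * C) := by
    simp only [orthoRetract, Matrix.mul_assoc]
  rw [hassoc]
  exact hM.norm_mul_inv_mul_le hβ _ _

/-! ### Perturbation of rank-`r` matrices -/

namespace IsThinSVD

variable {X L : Matrix (Fin n₁) (Fin n₂) ℝ} {s : Fin r → ℝ} {U₀ : Matrix (Fin n₁) (Fin r) ℝ}
  {s₀ : Fin r → ℝ} {V₀ : Matrix (Fin n₂) (Fin r) ℝ} {β σ : ℝ}

/-- Weyl's inequality for the least singular value. -/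
lemma isBoundedBelow_diagonal_sub (hX : IsThinSVD X U s V) (hL : IsThinSVD L U₀ s₀ V₀)
    (hσ : IsBoundedBelow σ (diagonal s₀)) : IsBoundedBelow (σ - ‖X - L‖) (diagonal s) := by
  have hLV : IsBoundedBelow σ (L * V₀) := fun x => by
    rw [hL.mul_right_factor, Matrix.mul_assoc, norm_mul_of_transpose_mul_self hL.1]
    exact hσ x
  have hXV : IsBoundedBelow (σ - ‖X - L‖) (X * V₀) := by
    simpa [← Matrix.add_mul] using hLV.add (norm_mul_le_of_transpose_mul_self hL.2.1 (X - L))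
  have hQ : ∀ x : Matrix (Fin r) Unit ℝ, ‖Vᵀ * V₀ * x‖ ≤ ‖x‖ := fun x => by
    rw [Matrix.mul_assoc]
    exact (norm_transpose_mul_le hX.2.1 _).trans_eq (norm_mul_of_transpose_mul_self hL.2.1 x)
  refine IsBoundedBelow.of_mul_right (Q := Vᵀ * V₀) (fun x => ?_) hQ
  have hfac : U * (diagonal s * (Vᵀ * V₀) * x) = X * V₀ * x := by
    rw [hX.2.2.2.2]; simp only [Matrix.mul_assoc]
  rw [← norm_mul_of_transpose_mul_self hX.1 (diagonal s * (Vᵀ * V₀) * x), hfac]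
  exact hXV x

lemma isBoundedBelow_transpose_mul_add_mul (hX : IsThinSVD X U s V)
    (hβ : IsBoundedBelow β (diagonal s)) (δ : Matrix (Fin n₁) (Fin n₂) ℝ) :
    IsBoundedBelow (β - ‖δ‖) (Uᵀ * (X + δ) * V) := by
  rw [Matrix.mul_add, Matrix.add_mul, hX.transpose_mul_mul]
  exact hβ.add ((norm_mul_le_of_transpose_mul_self hX.2.1 _).trans (norm_transpose_mul_le hX.1 δ))

lemma orthoRetract_eq_self (hX : IsThinSVD X U s V) (hdet : IsUnit (U₀ᵀ * X * V₀).det) :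
    orthoRetract U₀ V₀ X = X := by
  rw [hX.2.2.2.2] at hdet ⊢
  exact orthoRetract_mul hdet

lemma mul_norm_normalProj_orthoRetract_le (hX : IsThinSVD X U s V)
    (hβ : IsBoundedBelow β (diagonal s)) {δ : Matrix (Fin n₁) (Fin n₂) ℝ} (hδ : ‖δ‖ < β) :
    (β - ‖δ‖) * ‖normalProj U V (orthoRetract U V (X + δ))‖ ≤ ‖δ‖ ^ 2 / 2 := by
  have hP := isStarProjection_mul_transpose hX.1
  have hQ := (isStarProjection_mul_transpose hX.2.1).one_sub
  have hleft : ‖(1 - U * Uᵀ) * (X + δ) * V‖ ≤ ‖(1 - U * Uᵀ) * δ‖ := by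
    rw [Matrix.mul_add, hX.one_sub_mul, zero_add]
    exact norm_mul_le_of_transpose_mul_self hX.2.1 _
  have hright : ‖Uᵀ * (X + δ) * (1 - V * Vᵀ)‖ ≤ ‖U * Uᵀ * δ‖ := by
    rw [Matrix.mul_assoc, Matrix.add_mul, hX.mul_one_sub, zero_add, ← Matrix.mul_assoc,
      Matrix.mul_assoc U, norm_mul_of_transpose_mul_self hX.1]
    exact norm_mul_isStarProjection_le hQ _
  have hpyth := norm_sq_add_norm_sq_one_sub hP δ
  calc (β - ‖δ‖) * ‖normalProj U V (orthoRetract U V (X + δ))‖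
      ≤ ‖(1 - U * Uᵀ) * (X + δ) * V‖ * ‖Uᵀ * (X + δ) * (1 - V * Vᵀ)‖ :=
        mul_norm_mul_orthoRetract_mul_le (hX.isBoundedBelow_transpose_mul_add_mul hβ δ)
          (sub_pos.mpr hδ) _ _
    _ ≤ ‖(1 - U * Uᵀ) * δ‖ * ‖U * Uᵀ * δ‖ := by gcongr
    _ ≤ ‖δ‖ ^ 2 / 2 := by
        linarith [two_mul_le_add_sq ‖(1 - U * Uᵀ) * δ‖ ‖U * Uᵀ * δ‖]

lemma mul_norm_normalProj_sub_le_of_isThinSVD_right (hX : IsThinSVD X U s V)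
    (hL : IsThinSVD L U₀ s₀ V₀) (hσ : IsBoundedBelow σ (diagonal s₀)) (he : ‖X - L‖ < σ) :
    (σ - ‖X - L‖) * ‖normalProj U₀ V₀ (X - L)‖ ≤ ‖X - L‖ ^ 2 / 2 := by
  have hdet := (hL.isBoundedBelow_transpose_mul_add_mul hσ (X - L)).isUnit_det (sub_pos.mpr he)
  have h := hL.mul_norm_normalProj_orthoRetract_le hσ he
  rw [add_sub_cancel] at hdet h
  rwa [hX.orthoRetract_eq_self hdet, ← sub_zero (normalProj U₀ V₀ X), ← hL.normalProj_eq_zero,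
    ← normalProj_sub] at h

lemma mul_norm_normalProj_sub_le (hX : IsThinSVD X U s V) (hL : IsThinSVD L U₀ s₀ V₀)
    (hσ : IsBoundedBelow σ (diagonal s₀)) (hσ₀ : 0 < σ) :
    σ * ‖normalProj U V (X - L)‖ ≤ ‖X - L‖ ^ 2 := by
  have hP := (isStarProjection_mul_transpose hX.1).one_sub
  have hQ := (isStarProjection_mul_transpose hX.2.1).one_sub
  rw [← hL.transpose_mul_mul] at hσ
  have hleft : (1 - U * Uᵀ) * L * V₀ = -((1 - U * Uᵀ) * (X - L) * V₀) := by
    rw [Matrix.mul_sub, hX.one_sub_mul, zero_sub, Matrix.neg_mul, neg_neg]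
  have hright : U₀ᵀ * L * (1 - V * Vᵀ) = -(U₀ᵀ * ((X - L) * (1 - V * Vᵀ))) := by
    rw [Matrix.sub_mul, hX.mul_one_sub, zero_sub, Matrix.mul_neg, neg_neg, Matrix.mul_assoc]
  have hnormal : normalProj U V (X - L) =
      -((1 - U * Uᵀ) * orthoRetract U₀ V₀ L * (1 - V * Vᵀ)) := by
    rw [hL.orthoRetract_eq_self (hσ.isUnit_det hσ₀), normalProj_sub, hX.normalProj_eq_zero,
      zero_sub, normalProj]
  calc σ * ‖normalProj U V (X - L)‖
      = σ * ‖(1 - U * Uᵀ) * orthoRetract U₀ V₀ L * (1 - V * Vᵀ)‖ := by rw [hnormal, norm_neg]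
    _ ≤ ‖(1 - U * Uᵀ) * L * V₀‖ * ‖U₀ᵀ * L * (1 - V * Vᵀ)‖ :=
        mul_norm_mul_orthoRetract_mul_le hσ hσ₀ _ _
    _ = ‖(1 - U * Uᵀ) * (X - L) * V₀‖ * ‖U₀ᵀ * ((X - L) * (1 - V * Vᵀ))‖ := by
        rw [hleft, hright, norm_neg, norm_neg]
    _ ≤ ‖X - L‖ * ‖X - L‖ := by
        gcongr
        · exact (norm_mul_le_of_transpose_mul_self hL.2.1 _).trans
            (norm_isStarProjection_mul_le hP _)
        · exact (norm_transpose_mul_le hL.1 _).trans (norm_mul_isStarProjection_le hQ _)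
    _ = ‖X - L‖ ^ 2 := (sq _).symm

lemma mul_norm_sub_orthoRetract_le (hX : IsThinSVD X U s V) (hβ : IsBoundedBelow β (diagonal s))
    {δ : Matrix (Fin n₁) (Fin n₂) ℝ} (hδ : ‖δ‖ < β) (hδN : normalProj U V δ = 0) :
    (β - ‖δ‖) * ‖X + δ - orthoRetract U V (X + δ)‖ ≤ ‖δ‖ ^ 2 / 2 := by
  have hdet := (hX.isBoundedBelow_transpose_mul_add_mul hβ δ).isUnit_det (sub_pos.mpr hδ)
  have hM : normalProj U V (X + δ) = 0 := by
    rw [normalProj, Matrix.mul_add, Matrix.add_mul, ← normalProj, ← normalProj,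
      hX.normalProj_eq_zero, hδN, add_zero]
  have hT := tangentProj_orthoRetract hdet
  rw [tangentProj_eq_sub_normalProj, tangentProj_eq_sub_normalProj, hM, sub_zero] at hT
  have hN : X + δ - orthoRetract U V (X + δ) = -normalProj U V (orthoRetract U V (X + δ)) := by
    rw [sub_eq_iff_eq_add, neg_add_eq_sub, hT]
  rw [hN, norm_neg]
  exact hX.mul_norm_normalProj_orthoRetract_le hβ hδ

end IsThinSVD

lemma IsRetractUpdate.mul_norm_sub_le {X X' δ : Matrix (Fin n₁) (Fin n₂) ℝ} {s : Fin r → ℝ}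
    {β : ℝ} (hX' : IsRetractUpdate r X δ X') (hX : IsThinSVD X U s V)
    (hβ : IsBoundedBelow β (diagonal s)) (hδ : ‖δ‖ < β) (hδN : normalProj U V δ = 0) :
    (β - ‖δ‖) * ‖X + δ - X'‖ ≤ ‖δ‖ ^ 2 / 2 := by
  rcases hX' with hbest | ⟨U', s', V', hSVD, rfl⟩
  · have hle : ‖X + δ - X'‖ ≤ ‖X + δ - orthoRetract U V (X + δ)‖ := by
      simpa only [frob_eq_norm] using hbest.2 _ (rank_orthoRetract_le (X + δ))
    exact (mul_le_mul_of_nonneg_left hle (sub_nonneg.mpr hδ.le)).trans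
      (hX.mul_norm_sub_orthoRetract_le hβ hδ hδN)
  · have hβ' : IsBoundedBelow β (diagonal s') := by
      simpa using hSVD.isBoundedBelow_diagonal_sub hX hβ
    exact hSVD.mul_norm_sub_orthoRetract_le hβ' hδ (hSVD.normalProj_eq hX δ ▸ hδN)

end MatrixGeometry

/-! ### Percentiles -/

section Percentile

lemma countP_getElem_lt_le {α : Type*} [LinearOrder α] {l : List α} (hl : l.SortedLE) {i : ℕ}
    (hi : i < l.length) : l.countP (l[i] < ·) ≤ l.length - (i + 1) := by
  have htake : (l.take (i + 1)).countP (l[i] < ·) = 0 := by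
    simp only [List.countP_eq_zero, decide_eq_true_eq, not_lt]
    intro x hx
    obtain ⟨j, hj, rfl⟩ := List.getElem_of_mem hx
    rw [List.length_take] at hj
    rw [List.getElem_take]
    exact hl.getElem_le_getElem_of_le (by omega)
  calc l.countP (l[i] < ·) = (l.take (i + 1) ++ l.drop (i + 1)).countP (l[i] < ·) := by
        rw [List.take_append_drop]
    _ = (l.drop (i + 1)).countP (l[i] < ·) := by rw [List.countP_append, htake, zero_add]
    _ ≤ l.length - (i + 1) := List.countP_le_length.trans_eq List.length_drop

lemma length_sub_le_countP_getElem_le {α : Type*} [LinearOrder α] {l : List α} (hl : l.SortedLE)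
    {i : ℕ} (hi : i < l.length) : l.length - i ≤ l.countP (l[i] ≤ ·) := by
  have hdrop : (l.drop i).countP (l[i] ≤ ·) = (l.drop i).length := by
    simp only [List.countP_eq_length, decide_eq_true_eq]
    intro x hx
    obtain ⟨j, hj, rfl⟩ := List.getElem_of_mem hx
    rw [List.getElem_drop]
    exact hl.getElem_le_getElem_of_le (by omega)
  rw [← List.length_drop, ← hdrop]
  exact (List.drop_sublist i l).countP_le

variable {γ : ℝ}

lemma countP_percentile_lt (hγ : 0 < γ) (s : Multiset ℝ) :
    (s.countP (percentile γ s < ·) : ℝ) ≤ γ * s.card := by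
  rcases eq_or_ne s 0 with rfl | hs
  · simp
  have hcard : 0 < s.card := Multiset.card_pos.mpr hs
  have hceil : 0 < ⌈γ * s.card⌉₊ := Nat.ceil_pos.mpr (by positivity)
  have hidx : s.card - ⌈γ * s.card⌉₊ < s.sort.length := by rw [Multiset.length_sort]; omega
  have hcount := countP_getElem_lt_le (Multiset.pairwise_sort s (· ≤ ·)).sortedLE hidx
  rw [← Multiset.coe_countP, Multiset.sort_eq, Multiset.length_sort] at hcount
  have hlt : s.countP (percentile γ s < ·) < ⌈γ * s.card⌉₊ := by
    rw [percentile, List.getD_eq_getElem _ _ hidx]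
    exact hcount.trans_lt (by omega)
  exact (Nat.lt_ceil.mp hlt).le

lemma le_countP_percentile_le (hγ : γ ≤ 1) (s : Multiset ℝ) :
    γ * s.card ≤ s.countP (percentile γ s ≤ ·) := by
  rcases Nat.eq_zero_or_pos ⌈γ * s.card⌉₊ with hceil | hceil
  · exact (Nat.ceil_eq_zero.mp hceil).trans (Nat.cast_nonneg _)
  have hle : ⌈γ * s.card⌉₊ ≤ s.card :=
    Nat.ceil_le.mpr (mul_le_of_le_one_left (Nat.cast_nonneg _) hγ)
  have hidx : s.card - ⌈γ * s.card⌉₊ < s.sort.length := by rw [Multiset.length_sort]; omega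
  have hcount := length_sub_le_countP_getElem_le (Multiset.pairwise_sort s (· ≤ ·)).sortedLE hidx
  rw [← Multiset.coe_countP, Multiset.sort_eq, Multiset.length_sort] at hcount
  refine (Nat.le_ceil _).trans (Nat.cast_le.mpr ?_)
  rw [percentile, List.getD_eq_getElem _ _ hidx]
  exact le_trans (by omega) hcount

lemma countP_map_val {ι α : Type*} (s : Finset ι) (f : ι → α) (p : α → Prop) [DecidablePred p] :
    (s.val.map f).countP p = (s.filter fun j => p (f j)).card := by
  rw [Multiset.countP_map]
  rfl

variable {ι : Type*} [Fintype ι] {γs x : ℝ} {e s : ι → ℝ}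

lemma mul_sq_le_sum_sq_of_abs_le_percentile (hγ : γ ≤ 1)
    (hs : ((Finset.univ.filter fun j => s j ≠ 0).card : ℝ) ≤ γs * Fintype.card ι)
    (hx : |x| ≤ percentile γ (Finset.univ.val.map fun j => |e j - s j|)) :
    (γ - γs) * Fintype.card ι * x ^ 2 ≤ ∑ j, e j ^ 2 := by
  classical
  set p := percentile γ (Finset.univ.val.map fun j => |e j - s j|)
  set A := Finset.univ.filter fun j => p ≤ |e j - s j|
  set B := Finset.univ.filter fun j => s j ≠ 0
  have hA : γ * Fintype.card ι ≤ A.card := by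
    simpa [p, A, countP_map_val] using
      le_countP_percentile_le hγ (Finset.univ.val.map fun j => |e j - s j|)
  have hAB : (γ - γs) * Fintype.card ι ≤ (A \ B).card := by
    have hcard : (A.card : ℝ) ≤ (A \ B).card + B.card := by
      exact_mod_cast Finset.card_le_card_sdiff_add_card
    linarith
  calc (γ - γs) * Fintype.card ι * x ^ 2 ≤ (A \ B).card * x ^ 2 := by gcongr
    _ = ∑ j ∈ A \ B, x ^ 2 := by rw [Finset.sum_const, nsmul_eq_mul]
    _ ≤ ∑ j ∈ A \ B, e j ^ 2 := by
        refine Finset.sum_le_sum fun j hj => ?_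
        obtain ⟨hpj, hsj⟩ : p ≤ |e j - s j| ∧ s j = 0 := by simpa [A, B] using hj
        rw [hsj, sub_zero] at hpj
        exact sq_le_sq.mpr (hx.trans hpj)
    _ ≤ ∑ j, e j ^ 2 :=
        Finset.sum_le_sum_of_subset_of_nonneg (Finset.subset_univ _) fun _ _ _ => sq_nonneg _

end Percentile

/-! ### Sparse index sets -/

section Sparsity

open scoped Matrix.Norms.Frobenius

variable {n₁ n₂ r : ℕ} {Φ Ψ : Finset (Fin n₁ × Fin n₂)} {c γ γs : ℝ}

/-- The index set `Φ` meets each row in at most `c n₂` positions and each column in at most `c n₁`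
positions. -/
def IsSparse (c : ℝ) (Φ : Finset (Fin n₁ × Fin n₂)) : Prop :=
  (∀ i, ((Finset.univ.filter fun j => (i, j) ∈ Φ).card : ℝ) ≤ c * n₂) ∧
    ∀ j, ((Finset.univ.filter fun i => (i, j) ∈ Φ).card : ℝ) ≤ c * n₁

/-- The support of a matrix. -/
def nonzeroEntries (S : Matrix (Fin n₁) (Fin n₂) ℝ) : Finset (Fin n₁ × Fin n₂) :=
  Finset.univ.filter fun q => S q.1 q.2 ≠ 0

/-- The positions at which `hardThresh γ A` replaces the entry of `A` by zero. -/
def thresholdedEntries (γ : ℝ) (A : Matrix (Fin n₁) (Fin n₂) ℝ) : Finset (Fin n₁ × Fin n₂) :=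
  Finset.univ.filter fun q => percentile γ (rowAbs A q.1) < |A q.1 q.2| ∧
    percentile γ (colAbs A q.2) < |A q.1 q.2|

namespace IsSparse

lemma mono (hΦ : IsSparse c Φ) (hΨ : Ψ ⊆ Φ) : IsSparse c Ψ := by
  refine ⟨fun i => le_trans ?_ (hΦ.1 i), fun j => le_trans ?_ (hΦ.2 j)⟩ <;> gcongr

lemma union {d : ℝ} (hΦ : IsSparse c Φ) (hΨ : IsSparse d Ψ) : IsSparse (c + d) (Φ ∪ Ψ) := by
  simp only [IsSparse, Finset.mem_union, Finset.filter_or, add_mul]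
  exact ⟨fun i => (Nat.cast_le.mpr (Finset.card_union_le _ _)).trans
      ((Nat.cast_add _ _).trans_le (add_le_add (hΦ.1 i) (hΨ.1 i))),
    fun j => (Nat.cast_le.mpr (Finset.card_union_le _ _)).trans
      ((Nat.cast_add _ _).trans_le (add_le_add (hΦ.2 j) (hΨ.2 j)))⟩

end IsSparse

lemma SparseSet.isSparse_nonzeroEntries {S : Matrix (Fin n₁) (Fin n₂) ℝ} (hS : SparseSet γs S) :
    IsSparse γs (nonzeroEntries S) := by
  simpa only [IsSparse, nonzeroEntries, Finset.mem_filter_univ, SparseSet] using hS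

lemma SparseSet.nonneg {S : Matrix (Fin n₁) (Fin n₂) ℝ} (hS : SparseSet γs S) (hn₁ : 0 < n₁)
    (hn₂ : 0 < n₂) : 0 ≤ γs :=
  nonneg_of_mul_nonneg_left ((Nat.cast_nonneg _).trans (hS.1 ⟨0, hn₁⟩)) (Nat.cast_pos.mpr hn₂)

lemma mem_thresholdedEntries {A : Matrix (Fin n₁) (Fin n₂) ℝ} {i : Fin n₁} {j : Fin n₂} :
    (i, j) ∈ thresholdedEntries γ A ↔
      percentile γ (rowAbs A i) < |A i j| ∧ percentile γ (colAbs A j) < |A i j| :=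
  Finset.mem_filter_univ _

lemma hardThresh_apply (A : Matrix (Fin n₁) (Fin n₂) ℝ) (i : Fin n₁) (j : Fin n₂) :
    hardThresh γ A i j = if (i, j) ∈ thresholdedEntries γ A then 0 else A i j := by
  simp only [hardThresh, of_apply, mem_thresholdedEntries]

lemma isSparse_thresholdedEntries (hγ : 0 < γ) (A : Matrix (Fin n₁) (Fin n₂) ℝ) :
    IsSparse γ (thresholdedEntries γ A) := by
  simp only [IsSparse, mem_thresholdedEntries]
  refine ⟨fun i => ?_, fun j => ?_⟩
  · have h := countP_percentile_lt hγ (rowAbs A i)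
    rw [rowAbs, countP_map_val, Multiset.card_map, Finset.card_val, Finset.card_fin] at h
    refine le_trans ?_ h
    gcongr
    exact And.left
  · have h := countP_percentile_lt hγ (colAbs A j)
    rw [colAbs, countP_map_val, Multiset.card_map, Finset.card_val, Finset.card_fin] at h
    refine le_trans ?_ h
    gcongr
    exact And.right

lemma projObs_add (A B : Matrix (Fin n₁) (Fin n₂) ℝ) :
    projObs Φ (A + B) = projObs Φ A + projObs Φ B := by
  ext i j
  simp only [projObs, of_apply, Matrix.add_apply]
  split_ifs <;> simp

lemma norm_projObs_sq (A : Matrix (Fin n₁) (Fin n₂) ℝ) :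
    ‖projObs Φ A‖ ^ 2 = ∑ i, ∑ j, if (i, j) ∈ Φ then A i j ^ 2 else 0 := by
  simp only [frobenius_norm_sq, projObs, of_apply, ite_pow, zero_pow two_ne_zero]

lemma norm_projObs_le (A : Matrix (Fin n₁) (Fin n₂) ℝ) : ‖projObs Φ A‖ ≤ ‖A‖ := by
  refine abs_le_of_sq_le_sq' ?_ (norm_nonneg A) |>.2
  rw [norm_projObs_sq, frobenius_norm_sq]
  gcongr
  split_ifs
  exacts [le_rfl, sq_nonneg _]

lemma sum_sum_ite_le {ι κ : Type*} [Fintype ι] [Fintype κ] {p : ι → κ → Prop}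
    [∀ i, DecidablePred (p i)] (hp : ∀ i, ((Finset.univ.filter (p i)).card : ℝ) ≤ c)
    {f : ι → ℝ} (hf : ∀ i, 0 ≤ f i) : ∑ i, ∑ j, (if p i j then f i else 0) ≤ c * ∑ i, f i := by
  rw [Finset.mul_sum]
  refine Finset.sum_le_sum fun i _ => ?_
  rw [← Finset.sum_filter, Finset.sum_const, nsmul_eq_mul]
  exact mul_le_mul_of_nonneg_right (hp i) (hf i)

lemma mul_div_natCast_le {a : ℝ} (ha : 0 ≤ a) (n : ℕ) : n * (a / n) ≤ a := by
  rw [mul_div_left_comm]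
  exact mul_le_of_le_one_right ha (div_self_le_one _)

lemma IsSparse.norm_projObs_sq_le (hΦ : IsSparse c Φ) (hc : 0 ≤ c)
    {A : Matrix (Fin n₁) (Fin n₂) ℝ} {f : Fin n₁ → ℝ} {g : Fin n₂ → ℝ} (hf : ∀ i, 0 ≤ f i)
    (hg : ∀ j, 0 ≤ g j) (hA : ∀ i j, (i, j) ∈ Φ → A i j ^ 2 ≤ f i / n₂ + g j / n₁) :
    ‖projObs Φ A‖ ^ 2 ≤ c * (∑ i, f i + ∑ j, g j) := by
  calc ‖projObs Φ A‖ ^ 2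
      ≤ ∑ i, ∑ j, ((if (i, j) ∈ Φ then f i / n₂ else 0) + if (i, j) ∈ Φ then g j / n₁ else 0) := by
        rw [norm_projObs_sq]
        gcongr with i _ j _
        split_ifs with h
        exacts [hA i j h, (add_zero _).ge]
    _ = (∑ i, ∑ j, if (i, j) ∈ Φ then f i / n₂ else 0) +
          ∑ j, ∑ i, if (i, j) ∈ Φ then g j / n₁ else 0 := by
        simp only [Finset.sum_add_distrib]
        rw [Finset.sum_comm (f := fun i j => if (i, j) ∈ Φ then g j / n₁ else 0)]
    _ ≤ c * n₂ * ∑ i, f i / n₂ + c * n₁ * ∑ j, g j / n₁ :=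
        add_le_add (sum_sum_ite_le hΦ.1 fun i => div_nonneg (hf i) n₂.cast_nonneg)
          (sum_sum_ite_le hΦ.2 fun j => div_nonneg (hg j) n₁.cast_nonneg)
    _ = c * (n₂ * ((∑ i, f i) / n₂) + n₁ * ((∑ j, g j) / n₁)) := by
        rw [← Finset.sum_div, ← Finset.sum_div]; ring
    _ ≤ c * (∑ i, f i + ∑ j, g j) := by
        gcongr
        exacts [mul_div_natCast_le (Finset.sum_nonneg fun i _ => hf i) _,
          mul_div_natCast_le (Finset.sum_nonneg fun j _ => hg j) _]

/-! ### Incoherence -/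

namespace Incoherent

variable {μ : ℝ} {U : Matrix (Fin n₁) (Fin r) ℝ} {V : Matrix (Fin n₂) (Fin r) ℝ}

lemma nonneg (h : Incoherent μ U V) (hr : 0 < r) (hU : Uᵀ * U = 1) : 0 ≤ μ := by
  by_contra! hμ
  have hrow : ∀ i, ∑ k, U i k ^ 2 = 0 := fun i => by
    have hneg : μ * r / n₁ ≤ 0 :=
      div_nonpos_of_nonpos_of_nonneg (mul_nonpos_of_nonpos_of_nonneg hμ.le r.cast_nonneg)
        n₁.cast_nonneg
    have hle := (h.1 i).trans_eq (Real.sqrt_eq_zero_of_nonpos hneg)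
    exact le_antisymm (Real.sqrt_eq_zero'.mp (le_antisymm hle (Real.sqrt_nonneg _)))
      (by positivity)
  have hnorm : ‖U‖ ^ 2 = r := by
    rw [frobenius_norm_sq_eq_trace, hU, trace_one, Fintype.card_fin]
  rw [frobenius_norm_sq, Finset.sum_eq_zero fun i _ => hrow i] at hnorm
  exact hr.ne (by exact_mod_cast hnorm)

lemma sum_sq_left_le (h : Incoherent μ U V) (hμ : 0 ≤ μ) (i : Fin n₁) :
    ∑ k, U i k ^ 2 ≤ μ * r / n₁ :=
  (Real.sqrt_le_sqrt_iff (by positivity)).mp (h.1 i)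

lemma sum_sq_right_le (h : Incoherent μ U V) (hμ : 0 ≤ μ) (j : Fin n₂) :
    ∑ k, V j k ^ 2 ≤ μ * r / n₂ :=
  (Real.sqrt_le_sqrt_iff (by positivity)).mp (h.2 j)

end Incoherent

lemma sq_mul_apply_le (A : Matrix (Fin n₁) (Fin r) ℝ) (B : Matrix (Fin r) (Fin n₂) ℝ)
    (i : Fin n₁) (j : Fin n₂) : (A * B) i j ^ 2 ≤ (∑ k, A i k ^ 2) * ∑ k, B k j ^ 2 := by
  rw [Matrix.mul_apply]
  exact Finset.sum_mul_sq_le_sq_mul_sq _ _ _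

lemma IsSparse.norm_projObs_tangentProj_sq_le {μ : ℝ} {U : Matrix (Fin n₁) (Fin r) ℝ}
    {V : Matrix (Fin n₂) (Fin r) ℝ} (hΦ : IsSparse c Φ) (hc : 0 ≤ c) (hμ : 0 ≤ μ)
    (hinc : Incoherent μ U V) (hU : Uᵀ * U = 1) (hV : Vᵀ * V = 1)
    (E : Matrix (Fin n₁) (Fin n₂) ℝ) :
    ‖projObs Φ (tangentProj U V E)‖ ^ 2 ≤ 2 * (c * μ * r) * ‖E‖ ^ 2 := by
  set H := Uᵀ * E
  set K := (1 - U * Uᵀ) * E * V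
  have hT : tangentProj U V E = U * H + K * Vᵀ := by
    simp only [H, K, tangentProj, Matrix.sub_mul, Matrix.one_mul, ← Matrix.mul_assoc]
    abel
  have hnorm : ‖H‖ ^ 2 + ‖K‖ ^ 2 ≤ ‖E‖ ^ 2 := by
    rw [← norm_sq_add_norm_sq_one_sub (isStarProjection_mul_transpose hU) E, Matrix.mul_assoc,
      norm_mul_of_transpose_mul_self hU]
    gcongr
    exact norm_mul_le_of_transpose_mul_self hV _
  have hentry : ∀ i j, (i, j) ∈ Φ → tangentProj U V E i j ^ 2 ≤
      2 * (μ * r) * (∑ k, K i k ^ 2) / n₂ + 2 * (μ * r) * (∑ k, H k j ^ 2) / n₁ := by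
    intro i j _
    have hUH : (U * H) i j ^ 2 ≤ μ * r / n₁ * ∑ k, H k j ^ 2 :=
      (sq_mul_apply_le U H i j).trans (by gcongr; exact hinc.sum_sq_left_le hμ i)
    have hKV : (K * Vᵀ) i j ^ 2 ≤ (∑ k, K i k ^ 2) * (μ * r / n₂) :=
      (sq_mul_apply_le K Vᵀ i j).trans (by gcongr; exact hinc.sum_sq_right_le hμ j)
    calc tangentProj U V E i j ^ 2
        ≤ 2 * ((U * H) i j ^ 2 + (K * Vᵀ) i j ^ 2) := by
          rw [hT, Matrix.add_apply]
          exact add_sq_le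
      _ ≤ 2 * (μ * r / n₁ * ∑ k, H k j ^ 2 + (∑ k, K i k ^ 2) * (μ * r / n₂)) := by gcongr
      _ = _ := by ring
  calc ‖projObs Φ (tangentProj U V E)‖ ^ 2
      ≤ c * (∑ i, 2 * (μ * r) * ∑ k, K i k ^ 2 + ∑ j, 2 * (μ * r) * ∑ k, H k j ^ 2) :=
        hΦ.norm_projObs_sq_le hc (fun i => by positivity) (fun j => by positivity) hentry
    _ = 2 * (c * μ * r) * (‖H‖ ^ 2 + ‖K‖ ^ 2) := by
        rw [← Finset.mul_sum, ← Finset.mul_sum, Finset.sum_comm (f := fun j k => H k j ^ 2),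
          ← frobenius_norm_sq, ← frobenius_norm_sq]
        ring
    _ ≤ 2 * (c * μ * r) * ‖E‖ ^ 2 := by gcongr

/-! ### The thresholded residual -/

lemma hardThresh_sub_sub (E S : Matrix (Fin n₁) (Fin n₂) ℝ) :
    hardThresh γ (E - S) - E =
      projObs (nonzeroEntries S \ thresholdedEntries γ (E - S)) (E - S) -
        projObs (thresholdedEntries γ (E - S) ∪ nonzeroEntries S) E := by
  ext i j
  rw [Matrix.sub_apply, hardThresh_apply]
  by_cases hT : (i, j) ∈ thresholdedEntries γ (E - S) <;> by_cases hS : S i j = 0 <;>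
    simp [projObs, nonzeroEntries, hT, hS]

lemma norm_projObs_sdiff_thresholdedEntries_sq_le {E S : Matrix (Fin n₁) (Fin n₂) ℝ}
    (hS : SparseSet γs S) (hγs : 0 ≤ γs) (hγ : γs < γ) (hγ1 : γ ≤ 1) :
    ‖projObs (nonzeroEntries S \ thresholdedEntries γ (E - S)) (E - S)‖ ^ 2 ≤
      2 * γs / (γ - γs) * ‖E‖ ^ 2 := by
  have : 0 < γ - γs := sub_pos.mpr hγ
  have hsparse := hS.isSparse_nonzeroEntries.mono
    (Finset.sdiff_subset (t := thresholdedEntries γ (E - S)))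
  have hrow : ∀ i, 0 ≤ (∑ j, E i j ^ 2) / (γ - γs) := fun i => by positivity
  have hcol : ∀ j, 0 ≤ (∑ i, E i j ^ 2) / (γ - γs) := fun j => by positivity
  refine (hsparse.norm_projObs_sq_le hγs hrow hcol fun i j hij => ?_).trans_eq ?_
  · have hn₁ : (0 : ℝ) < n₁ := Nat.cast_pos.mpr i.pos
    have hn₂ : (0 : ℝ) < n₂ := Nat.cast_pos.mpr j.pos
    have hkept : |(E - S) i j| ≤ percentile γ (rowAbs (E - S) i) ∨
        |(E - S) i j| ≤ percentile γ (colAbs (E - S) j) := by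
      rw [← not_lt, ← not_lt, ← not_and_or, ← mem_thresholdedEntries]
      exact (Finset.mem_sdiff.mp hij).2
    rw [div_div, div_div]
    rcases hkept with h | h
    · have hi := mul_sq_le_sum_sq_of_abs_le_percentile (e := E i) hγ1
        (by simpa using hS.1 i) h
      rw [Fintype.card_fin] at hi
      refine le_add_of_le_of_nonneg ?_ (by positivity)
      rwa [le_div_iff₀' (by positivity)]
    · have hj := mul_sq_le_sum_sq_of_abs_le_percentile (e := fun i => E i j) hγ1
        (by simpa using hS.2 j) h
      rw [Fintype.card_fin] at hj
      refine le_add_of_nonneg_of_le (by positivity) ?_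
      rwa [le_div_iff₀' (by positivity)]
  · rw [← Finset.sum_div, ← Finset.sum_div, Finset.sum_comm (f := fun j i => E i j ^ 2),
      ← frobenius_norm_sq]
    ring

lemma norm_hardThresh_sub_sub_sq_le {μ : ℝ} {U : Matrix (Fin n₁) (Fin r) ℝ}
    {V : Matrix (Fin n₂) (Fin r) ℝ} {S : Matrix (Fin n₁) (Fin n₂) ℝ} (hμ : 0 ≤ μ)
    (hinc : Incoherent μ U V) (hU : Uᵀ * U = 1) (hV : Vᵀ * V = 1) (hS : SparseSet γs S)
    (hγs : 0 ≤ γs) (hγ : γs < γ) (hγ1 : γ ≤ 1) (E : Matrix (Fin n₁) (Fin n₂) ℝ) :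
    ‖hardThresh γ (E - S) - E‖ ^ 2 ≤ 2 * ((4 * (γ + γs) * μ * r + 4 * γs / (γ - γs)) * ‖E‖ ^ 2 +
      ‖normalProj U V E‖ ^ 2) := by
  have hγ0 : 0 < γ := hγs.trans_lt hγ
  set Ψ := thresholdedEntries γ (E - S) ∪ nonzeroEntries S
  set G := projObs (nonzeroEntries S \ thresholdedEntries γ (E - S)) (E - S)
  have hG : ‖G‖ ^ 2 ≤ 2 * γs / (γ - γs) * ‖E‖ ^ 2 :=
    norm_projObs_sdiff_thresholdedEntries_sq_le hS hγs hγ hγ1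
  have hT : ‖projObs Ψ (tangentProj U V E)‖ ^ 2 ≤ 2 * ((γ + γs) * μ * r) * ‖E‖ ^ 2 :=
    ((isSparse_thresholdedEntries hγ0 _).union hS.isSparse_nonzeroEntries)
      |>.norm_projObs_tangentProj_sq_le (by positivity) hμ hinc hU hV E
  have hE : projObs Ψ E = projObs Ψ (normalProj U V E) + projObs Ψ (tangentProj U V E) := by
    rw [← projObs_add, tangentProj_eq_sub_normalProj, add_sub_cancel]
  have htri : ‖hardThresh γ (E - S) - E‖ ≤
      ‖normalProj U V E‖ + (‖projObs Ψ (tangentProj U V E)‖ + ‖G‖) := by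
    rw [hardThresh_sub_sub, hE]
    calc _ ≤ ‖G‖ + ‖projObs Ψ (normalProj U V E) + projObs Ψ (tangentProj U V E)‖ :=
          norm_sub_le _ _
      _ ≤ ‖G‖ + (‖normalProj U V E‖ + ‖projObs Ψ (tangentProj U V E)‖) := by
          gcongr
          exact (norm_add_le _ _).trans (add_le_add_left (norm_projObs_le _) _)
      _ = _ := by ring
  calc ‖hardThresh γ (E - S) - E‖ ^ 2
      ≤ (‖normalProj U V E‖ + (‖projObs Ψ (tangentProj U V E)‖ + ‖G‖)) ^ 2 := by gcongr
    _ ≤ 2 * (‖normalProj U V E‖ ^ 2 + (‖projObs Ψ (tangentProj U V E)‖ + ‖G‖) ^ 2) := add_sq_le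
    _ ≤ 2 * (‖normalProj U V E‖ ^ 2 +
          2 * (‖projObs Ψ (tangentProj U V E)‖ ^ 2 + ‖G‖ ^ 2)) := by gcongr; exact add_sq_le
    _ ≤ 2 * (‖normalProj U V E‖ ^ 2 + 2 * (2 * ((γ + γs) * μ * r) * ‖E‖ ^ 2 +
          2 * γs / (γ - γs) * ‖E‖ ^ 2)) := by gcongr
    _ = _ := by ring

lemma IsThinSVD.norm_hardThresh_sub_sub_le {X L S : Matrix (Fin n₁) (Fin n₂) ℝ}
    {U U₀ : Matrix (Fin n₁) (Fin r) ℝ} {V V₀ : Matrix (Fin n₂) (Fin r) ℝ} {s s₀ : Fin r → ℝ}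
    {μ σ a C : ℝ} (hX : IsThinSVD X U s V) (hL : IsThinSVD L U₀ s₀ V₀)
    (hσ : IsBoundedBelow σ (diagonal s₀)) (hσ₀ : 0 < σ) (hμ : 0 ≤ μ) (hinc : Incoherent μ U₀ V₀)
    (hS : SparseSet γs S) (hγs : 0 ≤ γs) (hγ : γs < γ) (hγ1 : γ ≤ 1) (ha : a ≤ 1 / 2)
    (he : ‖X - L‖ ≤ a * σ) (hC₀ : 0 ≤ C)
    (hC : 4 * (γ + γs) * μ * r + 4 * γs / (γ - γs) + a ^ 2 ≤ C ^ 2) :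
    ‖hardThresh γ (X - L - S) - (X - L)‖ ≤ 3 / 2 * C * ‖X - L‖ := by
  have he' : ‖X - L‖ ≤ σ / 2 := by nlinarith
  have hnormal : ‖normalProj U₀ V₀ (X - L)‖ ≤ a * ‖X - L‖ := by
    have h := hX.mul_norm_normalProj_sub_le_of_isThinSVD_right hL hσ (by linarith)
    refine le_of_mul_le_mul_left ?_ hσ₀
    nlinarith [norm_nonneg (normalProj U₀ V₀ (X - L)), norm_nonneg (X - L)]
  refine abs_le_of_sq_le_sq' ?_ (by positivity) |>.2
  calc ‖hardThresh γ (X - L - S) - (X - L)‖ ^ 2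
      ≤ 2 * ((4 * (γ + γs) * μ * r + 4 * γs / (γ - γs)) * ‖X - L‖ ^ 2 +
          ‖normalProj U₀ V₀ (X - L)‖ ^ 2) :=
        norm_hardThresh_sub_sub_sq_le hμ hinc hL.1 hL.2.1 hS hγs hγ hγ1 _
    _ ≤ 2 * ((4 * (γ + γs) * μ * r + 4 * γs / (γ - γs)) * ‖X - L‖ ^ 2 + (a * ‖X - L‖) ^ 2) := by
        gcongr
    _ = 2 * (4 * (γ + γs) * μ * r + 4 * γs / (γ - γs) + a ^ 2) * ‖X - L‖ ^ 2 := by ring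
    _ ≤ 2 * C ^ 2 * ‖X - L‖ ^ 2 := by gcongr
    _ ≤ (3 / 2 * C * ‖X - L‖) ^ 2 := by nlinarith [sq_nonneg (C * ‖X - L‖)]

end Sparsity

/-! ### One step of the descent -/

section Descent

open scoped Matrix.Norms.Frobenius

variable {n₁ n₂ r : ℕ} {X L X' E G : Matrix (Fin n₁) (Fin n₂) ℝ}
  {U U₀ : Matrix (Fin n₁) (Fin r) ℝ} {V V₀ : Matrix (Fin n₂) (Fin r) ℝ} {s s₀ : Fin r → ℝ}
  {η ε σ C : ℝ}

lemma norm_sub_smul_tangentProj_self_le (hU : Uᵀ * U = 1) (hV : Vᵀ * V = 1) (hη₀ : 0 ≤ η)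
    (hη₁ : η ≤ 1) (hE : ‖normalProj U V E‖ ≤ ‖E‖ / 2) :
    ‖E - η • tangentProj U V E‖ ≤ (1 - 3 / 4 * η + 3 / 8 * η ^ 2) * ‖E‖ := by
  have hsplit : E - η • tangentProj U V E = (1 - η) • E + η • normalProj U V E := by
    rw [tangentProj_eq_sub_normalProj]
    module
  have hrate : 0 ≤ 1 - 3 / 4 * η + 3 / 8 * η ^ 2 := by nlinarith
  refine abs_le_of_sq_le_sq' ?_ (by positivity) |>.2
  calc ‖E - η • tangentProj U V E‖ ^ 2
      = (1 - η) ^ 2 * ‖E‖ ^ 2 + (2 * (1 - η) * η + η ^ 2) * ‖normalProj U V E‖ ^ 2 := by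
        rw [hsplit, norm_sq_smul_add_smul_normalProj hU hV]
    _ ≤ (1 - η) ^ 2 * ‖E‖ ^ 2 + (2 * (1 - η) * η + η ^ 2) * (‖E‖ / 2) ^ 2 := by
        have : 0 ≤ 1 - η := sub_nonneg.mpr hη₁
        gcongr
    _ = (1 - 3 / 2 * η + 3 / 4 * η ^ 2) * ‖E‖ ^ 2 := by ring
    _ ≤ ((1 - 3 / 4 * η + 3 / 8 * η ^ 2) * ‖E‖) ^ 2 := by
        rw [mul_pow]
        gcongr
        nlinarith [sq_nonneg (3 / 4 * η - 3 / 8 * η ^ 2)]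

lemma norm_sub_smul_tangentProj_le (hU : Uᵀ * U = 1) (hV : Vᵀ * V = 1) (hη₀ : 0 ≤ η)
    (hη₁ : η ≤ 1) (hE : ‖normalProj U V E‖ ≤ ‖E‖ / 2) (hG : ‖G - E‖ ≤ ε * ‖E‖) :
    ‖E - η • tangentProj U V G‖ ≤ (1 - (3 / 4 - ε) * η + 3 / 8 * η ^ 2) * ‖E‖ := by
  have hsplit : E - η • tangentProj U V G =
      E - η • tangentProj U V E - η • tangentProj U V (G - E) := by
    simp only [tangentProj_eq_sub_normalProj, normalProj_sub]
    module
  calc ‖E - η • tangentProj U V G‖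
      ≤ ‖E - η • tangentProj U V E‖ + η * ‖tangentProj U V (G - E)‖ := by
        rw [hsplit]
        refine (norm_sub_le _ _).trans_eq ?_
        rw [norm_smul, Real.norm_of_nonneg hη₀]
    _ ≤ (1 - 3 / 4 * η + 3 / 8 * η ^ 2) * ‖E‖ + η * (ε * ‖E‖) := by
        gcongr
        exacts [norm_sub_smul_tangentProj_self_le hU hV hη₀ hη₁ hE,
          (norm_tangentProj_le hU hV _).trans hG]
    _ = (1 - (3 / 4 - ε) * η + 3 / 8 * η ^ 2) * ‖E‖ := by ring

lemma norm_neg_smul_tangentProj_le (hU : Uᵀ * U = 1) (hV : Vᵀ * V = 1) (hη₀ : 0 ≤ η)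
    (hG : ‖G - E‖ ≤ ‖E‖) : ‖-(η • tangentProj U V G)‖ ≤ 2 * η * ‖E‖ := by
  have hG' : ‖G‖ ≤ 2 * ‖E‖ := by linarith [norm_le_insert' G E]
  rw [norm_neg, norm_smul, Real.norm_of_nonneg hη₀, mul_comm 2, mul_assoc]
  gcongr
  exact (norm_tangentProj_le hU hV G).trans hG'

lemma IsRetractUpdate.norm_add_sub_le (hX : IsThinSVD X U s V) (hσ₀ : 0 < σ)
    (hσ : IsBoundedBelow (σ / 2) (diagonal s)) (hη₀ : 0 ≤ η) (hη : η ≤ 1 / 4)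
    (hE : ‖E‖ ≤ σ / 2) (hG : ‖G - E‖ ≤ ‖E‖)
    (hX' : IsRetractUpdate r X (-(η • tangentProj U V G)) X') :
    ‖X + -(η • tangentProj U V G) - X'‖ ≤ 4 * η ^ 2 * ‖E‖ := by
  set δ := -(η • tangentProj U V G) with hδdef
  have hδ : ‖δ‖ ≤ 2 * η * ‖E‖ := norm_neg_smul_tangentProj_le hX.1 hX.2.1 hη₀ hG
  have hδσ : ‖δ‖ ≤ σ / 4 := by nlinarith [norm_nonneg E]
  have hδN : normalProj U V δ = 0 := by
    rw [hδdef, ← neg_smul, normalProj_smul, normalProj_tangentProj hX.1 hX.2.1, smul_zero]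
  have h := hX'.mul_norm_sub_le hX hσ (by linarith) hδN
  refine le_of_mul_le_mul_left ?_ (by positivity : 0 < σ / 4)
  calc σ / 4 * ‖X + δ - X'‖ ≤ (σ / 2 - ‖δ‖) * ‖X + δ - X'‖ := by gcongr; linarith
    _ ≤ ‖δ‖ ^ 2 / 2 := h
    _ ≤ (2 * η * ‖E‖) ^ 2 / 2 := by gcongr
    _ = 2 * η ^ 2 * ‖E‖ * ‖E‖ := by ring
    _ ≤ 2 * η ^ 2 * ‖E‖ * (σ / 2) := by gcongr
    _ = σ / 4 * (4 * η ^ 2 * ‖E‖) := by ring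

lemma IsRetractUpdate.norm_sub_le_mul_norm_sub (hX : IsThinSVD X U s V) (hL : IsThinSVD L U₀ s₀ V₀)
    (hσ : IsBoundedBelow σ (diagonal s₀)) (hσ₀ : 0 < σ) (hC₀ : 0 ≤ C)
    (hC : C ≤ 1 / 2) (hη₀ : 0 ≤ η) (hη : η ≤ (1 - 2 * C) / 8) (he : ‖X - L‖ ≤ σ / 2)
    (hG : ‖G - (X - L)‖ ≤ 3 / 2 * C * ‖X - L‖)
    (hX' : IsRetractUpdate r X (-(η • tangentProj U V G)) X') :
    ‖X' - L‖ ≤ (1 - (1 - 2 * C) / 8 * η) * ‖X - L‖ := by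
  have hnormal : ‖normalProj U V (X - L)‖ ≤ ‖X - L‖ / 2 := by
    refine le_of_mul_le_mul_left ((hX.mul_norm_normalProj_sub_le hL hσ hσ₀).trans ?_) hσ₀
    nlinarith [norm_nonneg (X - L)]
  have hs : IsBoundedBelow (σ / 2) (diagonal s) :=
    (hX.isBoundedBelow_diagonal_sub hL hσ).mono (by linarith)
  have hG' : ‖G - (X - L)‖ ≤ ‖X - L‖ :=
    hG.trans (mul_le_of_le_one_left (norm_nonneg _) (by linarith))
  set δ := -(η • tangentProj U V G) with hδ
  have hretract : ‖X + δ - X'‖ ≤ 4 * η ^ 2 * ‖X - L‖ :=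
    hX'.norm_add_sub_le hX hσ₀ hs hη₀ (by linarith) he hG'
  have hdescent : ‖X + δ - L‖ ≤ (1 - (3 / 4 - 3 / 2 * C) * η + 3 / 8 * η ^ 2) * ‖X - L‖ := by
    rw [hδ, ← sub_eq_add_neg, sub_right_comm]
    exact norm_sub_smul_tangentProj_le hX.1 hX.2.1 hη₀ (by linarith) hnormal hG
  calc ‖X' - L‖ = ‖(X + δ - L) - (X + δ - X')‖ := by rw [sub_sub_sub_cancel_left]
    _ ≤ (1 - (3 / 4 - 3 / 2 * C) * η + 3 / 8 * η ^ 2) * ‖X - L‖ + 4 * η ^ 2 * ‖X - L‖ :=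
        (norm_sub_le _ _).trans (add_le_add hdescent hretract)
    _ = (1 - (3 / 4 * (1 - 2 * C) - 35 / 8 * η) * η) * ‖X - L‖ := by ring
    _ ≤ (1 - (1 - 2 * C) / 8 * η) * ‖X - L‖ := by gcongr; linarith

lemma IsGradStep.frob_sub_le {S : Matrix (Fin n₁) (Fin n₂) ℝ} {μ γ γs a : ℝ}
    (hstep : IsGradStep γ η r (L + S) X X') (hL : IsThinSVD L U₀ s₀ V₀) (hσ₀ : 0 < σ)
    (hσ : ∀ k, σ ≤ s₀ k) (hμ : 0 ≤ μ) (hinc : Incoherent μ U₀ V₀) (hS : SparseSet γs S)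
    (hγs : 0 ≤ γs) (hγ : γs < γ) (hγ1 : γ ≤ 1) (ha : a ≤ 1 / 2) (hC₀ : 0 ≤ C) (hC₁ : C ≤ 1 / 2)
    (hC : 4 * (γ + γs) * μ * r + 4 * γs / (γ - γs) + a ^ 2 ≤ C ^ 2) (hη₀ : 0 ≤ η)
    (hη : η ≤ (1 - 2 * C) / 8) (he : frob (X - L) ≤ a * σ) :
    frob (X' - L) ≤ (1 - (1 - 2 * C) / 8 * η) * frob (X - L) := by
  obtain ⟨U, s, V, hX, hX'⟩ := hstep
  rw [frob_eq_norm] at he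
  rw [frob_eq_norm, frob_eq_norm]
  have hbdd : IsBoundedBelow σ (diagonal s₀) := isBoundedBelow_diagonal hσ₀.le hσ
  have hgrad := hX.norm_hardThresh_sub_sub_le hL hbdd hσ₀ hμ hinc hS hγs hγ hγ1 ha he hC₀ hC
  rw [sub_sub] at hgrad
  exact hX'.norm_sub_le_mul_norm_sub hX hL hbdd hσ₀ hC₀ hC₁ hη₀ hη (by nlinarith) hgrad

end Descent

end RPCA

/-- linear convergence of manifold gradient descent, fully observed case. -/
theorem convergence_fully_observed
    {n₁ n₂ r : ℕ} (hr : 0 < r)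
    (μc γ γs a C₁ : ℝ)
    (Lstar Sstar Y L0 : Matrix (Fin n₁) (Fin n₂) ℝ)
    (Ustar : Matrix (Fin n₁) (Fin r) ℝ) (sstar : Fin r → ℝ)
    (Vstar : Matrix (Fin n₂) (Fin r) ℝ)
    (hSVD : RPCA.IsThinSVD Lstar Ustar sstar Vstar)
    (hinc : RPCA.Incoherent μc Ustar Vstar)
    (hS : RPCA.SparseSet γs Sstar)
    (hY : Y = Lstar + Sstar)
    (hγ0 : 0 < γ) (hγ1 : γ < 1)
    (ha : a ≤ 1 / 2)
    (hγ : γ > 2 * γs)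
    (hC₁ : C₁ = Real.sqrt (4 * (γ + 2 * γs) * μc * r + 4 * γs / (γ - γs) + a ^ 2))
    (hC₁lt : C₁ < 1 / 2)
    (hinit : RPCA.frob (L0 - Lstar) ≤ a * sstar ⟨r - 1, Nat.sub_lt hr Nat.one_pos⟩) :
    ∃ η₀ > 0, ∀ η : ℝ, 0 < η → η < η₀ →
      ∀ L : ℕ → Matrix (Fin n₁) (Fin n₂) ℝ,
        L 0 = L0 →
        (∀ k, RPCA.IsGradStep γ η r Y (L k) (L (k + 1))) →
        ∀ k, RPCA.frob (L k - Lstar) ≤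
          (1 - (1 - 2 * C₁) / 8 * η) ^ k * RPCA.frob (L0 - Lstar) := by
  have hμ : 0 ≤ μc := hinc.nonneg hr hSVD.1
  have hγs : 0 ≤ γs := hS.nonneg (hSVD.pos_left hr) (hSVD.transpose.pos_left hr)
  have hγγs : γs < γ := by linarith
  have hC₁sq : 4 * (γ + γs) * μc * r + 4 * γs / (γ - γs) + a ^ 2 ≤ C₁ ^ 2 := by
    have : 0 < γ - γs := sub_pos.mpr hγγs
    rw [hC₁, Real.sq_sqrt (by positivity)]
    gcongr
    linarith
  have hC₁0 : 0 ≤ C₁ := hC₁ ▸ Real.sqrt_nonneg _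
  have hσ : ∀ k, sstar ⟨r - 1, Nat.sub_lt hr Nat.one_pos⟩ ≤ sstar k :=
    fun k => hSVD.2.2.1 (Nat.le_sub_one_of_lt k.isLt)
  refine ⟨(1 - 2 * C₁) / 8, by linarith, ?_⟩
  rintro η hη₀ hη L rfl hstep
  refine RPCA.le_pow_mul_of_le_imp_le_mul (by nlinarith) (by nlinarith)
    (fun k => Real.sqrt_nonneg _) hinit fun k hk => ?_
  exact (hY ▸ hstep k).frob_sub_le hSVD (hSVD.2.2.2.1 _) hσ hμ hinc hS hγs hγγs hγ1.le ha hC₁0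
    hC₁lt.le hC₁sq hη₀.le hη.le hk
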